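/- Assume the single-operator reduction identity: there are μ ∈ ℂ, an integer S ≥ 0, and F : ℂ → ℂ such that, setting C := (μ−1)(β_1+β_2)/(β_1 β_2), for every complex u and every generic tuple v̄ = (v_1,…,v_S) the operator identity ν_{12}(u) ν_{12}(v̄) = C·( F(u) g(u, v̄) ν_{12}(v̄) + Σ_{i=1}^{S} g(v_i, u) F(v_i) g(v_i, v̄_i) ν_{12}(u) ν_{12}(v̄_i) ) holds. Then for every generic tuple w̄ of length p ≥ S one has the multiple-action reduction ν_{12}(w̄) |0⟩ = C^{p−S} Σ_{w̄ ⇒ {w̄_I, w̄_II}} F(w̄_I)·g(w̄_I, w̄_II)·ν_{12}(w̄_II) |0⟩, where the sum runs over all partitions of w̄ into disjoint subtuples with #w̄_I = p − S and #w̄_II = S; in particular, for tuples ū (length n) and v̄ (length m) with n + m ≥ S, ν_{12}(ū) ν_{12}(v̄) |0⟩ is given by this formula with w̄ = {ū, v̄} and p = n + m. -/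

import Mathlib

open scoped BigOperators

noncomputable section

/-- The rational function `g(u,v) = c/(u-v)`. -/
def gC (c u v : ℂ) : ℂ := c / (u - v)

/-- The rational function `f(u,v) = (u-v+c)/(u-v)`. -/
def fC (c u v : ℂ) : ℂ := (u - v + c) / (u - v)

/-- The rational function `h(u,v) = (u-v+c)/c`. -/
def hC (c u v : ℂ) : ℂ := (u - v + c) / c

/-- A family of parameters is generic if all pairwise differences avoid `0, ±c, ±2c`. -/
def Generic (c : ℂ) {ι : Type*} (w : ι → ℂ) : Prop :=
  ∀ i j, i ≠ j → w i - w j ≠ 0 ∧ w i - w j ≠ c ∧ w i - w j ≠ -c ∧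
    w i - w j ≠ 2 * c ∧ w i - w j ≠ -2 * c

/-- The modified Izergin determinant `K^{(z)}(x̄|ȳ)`. -/
def KIz (c z : ℂ) {ι κ : Type*} [Fintype ι] [Fintype κ] [DecidableEq κ]
    (x : ι → ℂ) (y : κ → ℂ) : ℂ :=
  Matrix.det (Matrix.of fun j k : κ =>
    -z * (if j = k then 1 else 0) +
      (∏ i, fC c (x i) (y j)) * (∏ i ∈ Finset.univ.erase j, fC c (y j) (y i))
        / hC c (y j) (y k))

/-- The conjugated modified Izergin determinant: `c` is replaced by `-c`. -/
def KIzBar (c z : ℂ) {ι κ : Type*} [Fintype ι] [Fintype κ] [DecidableEq κ]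
    (x : ι → ℂ) (y : κ → ℂ) : ℂ :=
  KIz (-c) z x y

/-- Restriction of a tuple to a subtuple indexed by a `Finset`. -/
def restr {p : ℕ} (w : Fin p → ℂ) (s : Finset (Fin p)) : {x // x ∈ s} → ℂ :=
  fun i => w i.1

/-- Double product `f(w̄_s, w̄_t)` over two subtuples of a tuple. -/
def fSS (c : ℂ) {p : ℕ} (w : Fin p → ℂ) (s t : Finset (Fin p)) : ℂ :=
  ∏ i ∈ s, ∏ j ∈ t, fC c (w i) (w j)

/-- Ordered product of operators over a subtuple (the operators pairwise commute,
so the order is irrelevant). -/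
def opProd {V : Type*} [AddCommGroup V] [Module ℂ V] {p : ℕ}
    (op : ℂ → Module.End ℂ V) (w : Fin p → ℂ) (s : Finset (Fin p)) : Module.End ℂ V :=
  ((s.sort (· ≤ ·)).map (fun i => op (w i))).prod

/-- The index subsets of a partition of `Fin p` into three parts. -/
def parts {p : ℕ} (σ : Fin p → Fin 3) (k : Fin 3) : Finset (Fin p) :=
  Finset.univ.filter (fun i => σ i = k)

/-!
The single-operator identity is symmetric in its `S + 1` parameters: it is the reduction formula for
`p = S + 1`, with `x` extracted in the first term and `v_i` in the `i`-th term of the sum. The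
general case follows by induction on the number `k = p - S` of extracted parameters. Set aside one
parameter `a`, reduce the others, and apply the identity to the `S + 1` operators that remain. The
terms in which the subtuple `t̄` has been extracted differ by the choice of the parameter `t_i`
extracted last, and relative to the expected weight they carry the factor
`∏ j ≠ i, (t_j - a) / (t_j - t_i)`. These factors are the Lagrange basis polynomials of `t̄`
evaluated at `a`, so they sum to `1`.
-/

section Reduction

open Finset

variable {K ι κ M : Type*} [Field K] [AddCommMonoid M] [Module K M]

theorem sum_prod_erase_sub_div_sub_eq_one [DecidableEq ι] {x : ι → K} {t : Finset ι}
    (hx : Set.InjOn x t) (ht : t.Nonempty) (y : K) :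
    ∑ i ∈ t, ∏ j ∈ t.erase i, (x j - y) / (x j - x i) = 1 := by
  have h := congrArg (Polynomial.eval y) (Lagrange.sum_basis hx ht)
  rw [Polynomial.eval_finsetSum, Polynomial.eval_one] at h
  rw [← h]
  refine sum_congr rfl fun i _ => ?_
  rw [Lagrange.basis, Polynomial.eval_prod]
  refine prod_congr rfl fun j _ => ?_
  simp only [Lagrange.basisDivisor, Polynomial.eval_mul, Polynomial.eval_C, Polynomial.eval_sub,
    Polynomial.eval_X]
  rw [← neg_sub y, ← neg_sub (x i), neg_div_neg_eq, div_eq_inv_mul]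

theorem sum_powersetCard_sum_sdiff_insert [DecidableEq ι] (W : Finset ι) (k : ℕ)
    (f : Finset ι → ι → M) :
    ∑ s ∈ powersetCard k W, ∑ i ∈ W \ s, f (insert i s) i
      = ∑ t ∈ powersetCard (k + 1) W, ∑ i ∈ t, f t i := by
  rw [sum_sigma', sum_sigma']
  refine sum_bij' (fun q _ => ⟨insert q.2 q.1, q.2⟩) (fun q _ => ⟨q.1.erase q.2, q.2⟩)
    ?_ ?_ ?_ ?_ fun _ _ => rfl
  all_goals
    rintro ⟨s, i⟩ h
    simp only [mem_sigma, mem_powersetCard, mem_sdiff] at h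
  · obtain ⟨⟨hsW, hs⟩, hiW, his⟩ := h
    simp [insert_subset_iff, hsW, hiW, his, hs]
  · obtain ⟨⟨hsW, hs⟩, his⟩ := h
    simp [(erase_subset i s).trans hsW, hsW his, his, hs]
  · simp [erase_insert h.2.2]
  · simp [insert_erase h.2]

/-- The weight `F(x̄_s) g(x̄_s, x̄_t)` of a partition `{x̄_s, x̄_t}`, where `g(u, v) = c / (u - v)`,
over an arbitrary field. -/
def partitionWeight (c : K) (F : K → K) (x : ι → K) (s t : Finset ι) : K :=
  (∏ i ∈ s, F (x i)) * ∏ i ∈ s, ∏ j ∈ t, c / (x i - x j)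

variable {c : K} {F : K → K} {x : ι → K} {B : Finset ι → M}

theorem partitionWeight_singleton (i : ι) (t : Finset ι) :
    partitionWeight c F x {i} t = F (x i) * ∏ j ∈ t, c / (x i - x j) := by
  simp only [partitionWeight, prod_singleton]

theorem partitionWeight_const_mul (C : K) (s t : Finset ι) :
    partitionWeight c (fun z => C * F z) x s t = C ^ #s * partitionWeight c F x s t := by
  simp only [partitionWeight, prod_mul_distrib, prod_const, mul_assoc]

variable [DecidableEq ι]

theorem partitionWeight_insert_left {i : ι} {s : Finset ι} (hi : i ∉ s) (t : Finset ι) :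
    partitionWeight c F x (insert i s) t
      = partitionWeight c F x {i} t * partitionWeight c F x s t := by
  simp only [partitionWeight, prod_insert hi, prod_singleton]
  ring

theorem partitionWeight_insert_right (s : Finset ι) {i : ι} {t : Finset ι} (hi : i ∉ t) :
    partitionWeight c F x s (insert i t)
      = partitionWeight c F x s t * ∏ j ∈ s, c / (x j - x i) := by
  simp only [partitionWeight, prod_insert hi, prod_mul_distrib]
  ring

theorem partitionWeight_mul_partitionWeight_singleton {i : ι} {s W : Finset ι} (hi : i ∈ W \ s) :
    partitionWeight c F x s (W \ s) * partitionWeight c F x {i} ((W \ s).erase i)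
      = partitionWeight c F x (insert i s) (W \ insert i s) * ∏ j ∈ s, c / (x j - x i) := by
  rw [sdiff_insert, partitionWeight_insert_left (mem_sdiff.1 hi).2]
  nth_rw 1 [← insert_erase hi]
  rw [partitionWeight_insert_right s (notMem_erase i _)]
  ring

/-- The sum over all partitions of `x̄_W` that extract `k` parameters: the right-hand side of the
reduction formula for vectors `B s`, which stand for `ν₁₂(x̄_s)|0⟩`. -/
def reductionSum (c : K) (F : K → K) (x : ι → K) (B : Finset ι → M) (k : ℕ) (W : Finset ι) : M :=
  ∑ s ∈ powersetCard k W, partitionWeight c F x s (W \ s) • B (W \ s)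

theorem reductionSum_zero (W : Finset ι) : reductionSum c F x B 0 W = B W := by
  simp [reductionSum, partitionWeight]

theorem reductionSum_one (W : Finset ι) :
    reductionSum c F x B 1 W
      = ∑ i ∈ W, partitionWeight c F x {i} (W.erase i) • B (W.erase i) := by
  simp [reductionSum, powersetCard_one, sdiff_singleton_eq_erase]

theorem reductionSum_const_mul (C : K) (k : ℕ) (W : Finset ι) :
    reductionSum c (fun z => C * F z) x B k W = C ^ k • reductionSum c F x B k W := by
  rw [reductionSum, reductionSum, smul_sum]
  refine sum_congr rfl fun s hs => ?_
  rw [partitionWeight_const_mul, (mem_powersetCard.1 hs).2, mul_smul]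

theorem reductionSum_map [DecidableEq κ] (e : κ ↪ ι) (k : ℕ) (W : Finset κ) :
    reductionSum c F x B k (W.map e)
      = reductionSum c F (fun i => x (e i)) (fun s => B (s.map e)) k W := by
  simp only [reductionSum, partitionWeight, powersetCard_map, sum_map, RelEmbedding.coe_toEmbedding,
    mapEmbedding_apply, ← Finset.map_sdiff, prod_map]

/-- The factor `∏ j ∈ s, (x j - x a) / c` kills the subsets containing the spectator `a` and cancels
`g(x̄_s, x_a)` for the others, so that `a` enters on the same footing as the elements of `W`. -/
theorem insert_eq_sum_of_eq_reductionSum (hc : c ≠ 0) (hx : Function.Injective x)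
    {b : ι → M →ₗ[K] M} (hb : ∀ a s, a ∉ s → b a (B s) = B (insert a s)) {k : ℕ} {a : ι}
    {W : Finset ι} (ha : a ∉ W) (hW : B W = reductionSum c F x B k W) :
    B (insert a W) = ∑ s ∈ powersetCard k (insert a W),
      ((∏ j ∈ s, (x j - x a) / c) * partitionWeight c F x s (insert a W \ s)) •
        B (insert a W \ s) := by
  rw [← hb a W ha, hW, reductionSum, map_sum,
    ← sum_subset (powersetCard_mono (subset_insert a W))]
  · refine sum_congr rfl fun s hs => ?_
    have has : a ∉ s := fun h => ha ((mem_powersetCard.1 hs).1 h)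
    have haWs : a ∉ W \ s := fun h => ha (mem_sdiff.1 h).1
    have hcancel : (∏ j ∈ s, (x j - x a) / c) * ∏ j ∈ s, c / (x j - x a) = 1 := by
      rw [← prod_mul_distrib]
      refine prod_eq_one fun j hj => ?_
      have hja : x j - x a ≠ 0 := sub_ne_zero.2 (hx.ne (ne_of_mem_of_not_mem hj has))
      rw [div_mul_div_cancel₀ hc, div_self hja]
    rw [map_smul, hb a _ haWs, insert_sdiff_of_notMem _ has, partitionWeight_insert_right s haWs,
      mul_left_comm, hcancel, mul_one]
  · intro s hs hsW
    have has : a ∈ s := by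
      by_contra has
      obtain ⟨hs, hcard⟩ := mem_powersetCard.1 hs
      exact hsW (mem_powersetCard.2 ⟨(subset_insert_iff_of_notMem has).1 hs, hcard⟩)
    rw [prod_eq_zero has (by rw [sub_self, zero_div]), zero_mul, zero_smul]

theorem eq_reductionSum_of_eq_reductionSum_one (hc : c ≠ 0) (hx : Function.Injective x)
    {b : ι → M →ₗ[K] M} (hb : ∀ a s, a ∉ s → b a (B s) = B (insert a s)) {S : ℕ}
    (hone : ∀ W : Finset ι, #W = S + 1 → B W = reductionSum c F x B 1 W) {k : ℕ}
    {W : Finset ι} (hW : #W = S + k) : B W = reductionSum c F x B k W := by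
  induction k generalizing W with
  | zero => exact (reductionSum_zero W).symm
  | succ k ih =>
    obtain ⟨a, W', ha, rfl, hW'⟩ := card_eq_succ.1 hW
    rw [insert_eq_sum_of_eq_reductionSum hc hx hb ha (ih hW')]
    set W := insert a W'
    let f (t : Finset ι) (i : ι) : M := (partitionWeight c F x t (W \ t) *
      ∏ j ∈ t.erase i, (x j - x a) / (x j - x i)) • B (W \ t)
    have hextract : ∀ s ∈ powersetCard k W,
        ((∏ j ∈ s, (x j - x a) / c) * partitionWeight c F x s (W \ s)) • B (W \ s)
          = ∑ i ∈ W \ s, f (insert i s) i := by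
      intro s hs
      obtain ⟨hsW, hs⟩ := mem_powersetCard.1 hs
      rw [hone (W \ s) (by rw [card_sdiff_of_subset hsW]; omega), reductionSum_one, smul_sum]
      refine sum_congr rfl fun i hi => ?_
      have hratio : ∏ j ∈ s, (x j - x a) / (x j - x i)
          = (∏ j ∈ s, (x j - x a) / c) * ∏ j ∈ s, c / (x j - x i) := by
        simp only [← prod_mul_distrib, div_mul_div_cancel₀ hc]
      simp only [f]
      rw [erase_insert (mem_sdiff.1 hi).2, hratio, smul_smul, mul_assoc,
        partitionWeight_mul_partitionWeight_singleton hi, sdiff_insert, mul_left_comm]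
    have hcollect : ∀ t ∈ powersetCard (k + 1) W,
        ∑ i ∈ t, f t i = partitionWeight c F x t (W \ t) • B (W \ t) := by
      intro t ht
      have hne : t.Nonempty := card_pos.1 (by rw [(mem_powersetCard.1 ht).2]; omega)
      rw [← sum_smul, ← mul_sum, sum_prod_erase_sub_div_sub_eq_one hx.injOn hne, mul_one]
    rw [sum_congr rfl hextract, sum_powersetCard_sum_sdiff_insert, sum_congr rfl hcollect,
      reductionSum]

end Reduction

section Operators

open Finset

theorem Generic.injective {c : ℂ} {ι : Type*} {w : ι → ℂ} (hw : Generic c w) :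
    Function.Injective w := fun i j hij => by
  by_contra hne
  exact (hw i j hne).1 (sub_eq_zero.2 hij)

theorem Generic.comp_injective {c : ℂ} {ι κ : Type*} {w : ι → ℂ} (hw : Generic c w) {e : κ → ι}
    (he : Function.Injective e) : Generic c (fun i => w (e i)) :=
  fun i j hij => hw (e i) (e j) (he.ne hij)

variable {V : Type*} [AddCommGroup V] [Module ℂ V] {op : ℂ → Module.End ℂ V} {n m : ℕ}

theorem opProd_univ (w : Fin n → ℂ) :
    opProd op w univ = (List.ofFn fun i => op (w i)).prod := by
  rw [opProd, Fin.sort_univ, List.ofFn_eq_map]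

theorem opProd_cons_univ (z : ℂ) (w : Fin n → ℂ) :
    opProd op (Fin.cons z w : Fin (n + 1) → ℂ) univ = op z * opProd op w univ := by
  simp [opProd_univ, List.ofFn_succ]

theorem opProd_append_univ (u : Fin n → ℂ) (v : Fin m → ℂ) :
    opProd op (Fin.append u v) univ = opProd op u univ * opProd op v univ := by
  simp [opProd_univ, List.ofFn_add]

theorem opProd_map (w : Fin m → ℂ) (e : Fin n ↪o Fin m) (s : Finset (Fin n)) :
    opProd op w (s.map e.toEmbedding) = opProd op (fun i => w (e i)) s := by
  rw [opProd, opProd, ← StrictMonoOn.map_finsetSort e.toEmbedding s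
    (e.strictMono.strictMonoOn _), List.map_map]
  rfl

theorem opProd_insert (hop : ∀ z z', Commute (op z) (op z')) (w : Fin n → ℂ) {a : Fin n}
    {s : Finset (Fin n)} (ha : a ∉ s) :
    opProd op w (insert a s) = op (w a) * opProd op w s := by
  have hperm : ((insert a s).sort (· ≤ ·)).Perm (a :: s.sort (· ≤ ·)) :=
    (sort_perm_toList _ _).trans <|
      (toList_insert ha).trans ((sort_perm_toList s _).symm.cons a)
  rw [opProd, (hperm.map fun i => op (w i)).prod_eq', List.map_cons, List.prod_cons, opProd]
  exact List.pairwise_map.2 (List.pairwise_of_forall fun _ _ => hop _ _)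

theorem opProd_cons_map_succ (z : ℂ) (w : Fin n → ℂ) (s : Finset (Fin n)) :
    opProd op (Fin.cons z w : Fin (n + 1) → ℂ) (s.map (Fin.succEmb n)) = opProd op w s :=
  opProd_map _ (Fin.succOrderEmb n) s

theorem reductionSum_opProd_one_cons (hop : ∀ z z', Commute (op z) (op z')) (c : ℂ) (F : ℂ → ℂ)
    (z : ℂ) (w : Fin n → ℂ) (v : V) :
    reductionSum c F (Fin.cons z w : Fin (n + 1) → ℂ)
        (fun s => opProd op (Fin.cons z w : Fin (n + 1) → ℂ) s v) 1 univ
      = (F z * ∏ i, gC c z (w i)) • opProd op w univ v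
        + ∑ i, (gC c (w i) z * F (w i) * ∏ j ∈ univ.erase i, gC c (w i) (w j)) •
            op z (opProd op w (univ.erase i) v) := by
  have hzero : (univ : Finset (Fin (n + 1))).erase 0 = univ.map (Fin.succEmb n) := by
    ext j; cases j using Fin.cases <;> simp
  have hsucc (i : Fin n) : (univ : Finset (Fin (n + 1))).erase i.succ
      = insert 0 ((univ.erase i).map (Fin.succEmb n)) := by
    ext j; cases j using Fin.cases <;> simp [(Fin.succ_ne_zero i).symm]
  rw [reductionSum_one, Fin.sum_univ_succ]
  congr 1
  · rw [hzero, opProd_cons_map_succ, partitionWeight_singleton, prod_map]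
    rfl
  · refine sum_congr rfl fun i _ => ?_
    have h0 : 0 ∉ (univ.erase i).map (Fin.succEmb n) := by simp
    rw [hsucc, opProd_insert hop _ h0, opProd_cons_map_succ, partitionWeight_singleton,
      prod_insert h0, prod_map, ← mul_assoc, mul_comm (F _)]
    rfl

theorem opProd_apply_eq_reductionSum {c : ℂ} (hc : c ≠ 0) (hop : ∀ z z', Commute (op z) (op z'))
    {F : ℂ → ℂ} {v : V} {S : ℕ}
    (hone : ∀ y : Fin (S + 1) → ℂ, Generic c y →
      opProd op y univ v = reductionSum c F y (fun s => opProd op y s v) 1 univ)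
    {w : Fin n → ℂ} (hw : Generic c w) {k : ℕ} {W : Finset (Fin n)} (hW : #W = S + k) :
    opProd op w W v = reductionSum c F w (fun s => opProd op w s v) k W := by
  refine eq_reductionSum_of_eq_reductionSum_one hc hw.injective
    (B := fun s => opProd op w s v) (b := fun a => op (w a))
    (fun a s ha => by rw [opProd_insert hop w ha, Module.End.mul_apply]) (fun T hT => ?_) hW
  let e := T.orderEmbOfFin hT
  rw [← map_orderEmbOfFin_univ T hT, reductionSum_map, opProd_map,
    hone _ (hw.comp_injective e.injective)]
  simp only [opProd_map]
  rfl

end Operators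

theorem stmt5_general
    (c : ℂ) (hc : c ≠ 0) (V : Type*) [AddCommGroup V] [Module ℂ V]
    (op : ℂ → Module.End ℂ V) (hop : ∀ z z', Commute (op z) (op z')) (v : V)
    (S : ℕ) (F : ℂ → ℂ) (C : ℂ)
    (hSingle : ∀ (x : ℂ) (w : Fin S → ℂ), Generic c (Fin.cons x w) →
      op x (opProd op w Finset.univ v)
        = (C * F x * ∏ i, gC c x (w i)) • opProd op w Finset.univ v
          + ∑ i : Fin S,
              (C * gC c (w i) x * F (w i) *
                  ∏ j ∈ Finset.univ.erase i, gC c (w i) (w j)) •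
                op x (opProd op w (Finset.univ.erase i) v)) :
    (∀ (p : ℕ), S ≤ p → ∀ (w : Fin p → ℂ), Generic c w →
        opProd op w Finset.univ v
          = C ^ (p - S) •
              ∑ s ∈ Finset.powersetCard (p - S) (Finset.univ : Finset (Fin p)),
                ((∏ i ∈ s, F (w i)) * ∏ i ∈ s, ∏ j ∈ sᶜ, gC c (w i) (w j)) •
                  (opProd op w sᶜ v))
      ∧ (∀ (n m : ℕ), S ≤ n + m → ∀ (u : Fin n → ℂ) (u' : Fin m → ℂ),
          Generic c (Fin.append u u') →
          (opProd op u Finset.univ * opProd op u' Finset.univ) v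
            = C ^ (n + m - S) •
                ∑ s ∈ Finset.powersetCard (n + m - S)
                    (Finset.univ : Finset (Fin (n + m))),
                  ((∏ i ∈ s, F (Fin.append u u' i)) *
                      ∏ i ∈ s, ∏ j ∈ sᶜ, gC c (Fin.append u u' i) (Fin.append u u' j)) •
                    (opProd op (Fin.append u u') sᶜ v)) := by
  have hone (y : Fin (S + 1) → ℂ) (hy : Generic c y) :
      opProd op y Finset.univ v
        = reductionSum c (fun z => C * F z) y (fun s => opProd op y s v) 1 Finset.univ := by
    obtain ⟨x, w, rfl⟩ : ∃ x w, y = Fin.cons x w := ⟨y 0, Fin.tail y, (Fin.cons_self_tail y).symm⟩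
    rw [opProd_cons_univ, Module.End.mul_apply, hSingle x w hy,
      reductionSum_opProd_one_cons hop]
    simp only [mul_left_comm, mul_assoc]
  have hmany (p : ℕ) (hp : S ≤ p) (w : Fin p → ℂ) (hw : Generic c w) :
      opProd op w Finset.univ v = C ^ (p - S) •
        reductionSum c F w (fun s => opProd op w s v) (p - S) Finset.univ := by
    rw [← reductionSum_const_mul]
    exact opProd_apply_eq_reductionSum hc hop hone hw (by simp [hp])
  simp only [reductionSum, partitionWeight, ← Finset.compl_eq_univ_sdiff] at hmany
  refine ⟨hmany, fun n m hnm u u' hw => ?_⟩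
  rw [← opProd_append_univ]
  exact hmany (n + m) hnm _ hw

/-- Reduction of the multiple action of `ν₁₂` operators on the vacuum:
if the single-operator reduction identity holds, then the action of `p ≥ S`
operators `ν₁₂` on `|0⟩` reduces to a sum over partitions with `#w̄_II = S`. -/
theorem stmt5
    (c : ℂ) (hc : c ≠ 0) (β1 β2 : ℂ) (hβ1 : β1 ≠ 0) (hβ2 : β2 ≠ 0)
    (V : Type*) [AddCommGroup V] [Module ℂ V]
    (N : Fin 2 → Fin 2 → ℂ → Module.End ℂ V)
    (vac : V) (lam1 lam2 : ℂ → ℂ)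
    (hYang : ∀ (i j k l : Fin 2) (x y : ℂ), x ≠ y →
      N i j x * N k l y - N k l y * N i j x
        = gC c x y • (N k j y * N i l x - N k j x * N i l y))
    (hCommSame : ∀ (i j : Fin 2) (x y : ℂ), N i j x * N i j y = N i j y * N i j x)
    (hvac11 : ∀ x : ℂ, N 0 0 x vac = lam1 x • vac + β2 • (N 0 1 x vac))
    (hvac22 : ∀ x : ℂ, N 1 1 x vac = lam2 x • vac + β1 • (N 0 1 x vac))
    (hvac21 : ∀ x : ℂ, N 1 0 x vac
      = (β1 * lam1 x + β2 * lam2 x) • vac + (β1 * β2) • (N 0 1 x vac))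
    (μ : ℂ) (S : ℕ) (F : ℂ → ℂ) (C : ℂ)
    (hCdef : C = (μ - 1) * (β1 + β2) / (β1 * β2))
    (hSingle : ∀ (x : ℂ) (w : Fin S → ℂ), Generic c (Fin.cons x w) →
      N 0 1 x * opProd (N 0 1) w Finset.univ
        = (C * F x * ∏ i, gC c x (w i)) • opProd (N 0 1) w Finset.univ
          + ∑ i : Fin S,
              (C * gC c (w i) x * F (w i) *
                  ∏ j ∈ Finset.univ.erase i, gC c (w i) (w j)) •
                (N 0 1 x * opProd (N 0 1) w (Finset.univ.erase i))) :
    (∀ (p : ℕ), S ≤ p → ∀ (w : Fin p → ℂ), Generic c w →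
        opProd (N 0 1) w Finset.univ vac
          = C ^ (p - S) •
              ∑ s ∈ Finset.powersetCard (p - S) (Finset.univ : Finset (Fin p)),
                ((∏ i ∈ s, F (w i)) * ∏ i ∈ s, ∏ j ∈ sᶜ, gC c (w i) (w j)) •
                  (opProd (N 0 1) w sᶜ vac))
      ∧ (∀ (n m : ℕ), S ≤ n + m → ∀ (u : Fin n → ℂ) (v : Fin m → ℂ),
          Generic c (Fin.append u v) →
          (opProd (N 0 1) u Finset.univ * opProd (N 0 1) v Finset.univ) vac
            = C ^ (n + m - S) •
                ∑ s ∈ Finset.powersetCard (n + m - S)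
                    (Finset.univ : Finset (Fin (n + m))),
                  ((∏ i ∈ s, F (Fin.append u v i)) *
                      ∏ i ∈ s, ∏ j ∈ sᶜ, gC c (Fin.append u v i) (Fin.append u v j)) •
                    (opProd (N 0 1) (Fin.append u v) sᶜ vac)) := by
  refine stmt5_general c hc V (N 0 1) (hCommSame 0 1) vac S F C fun x w hw => ?_
  simpa using DFunLike.congr_fun (hSingle x w hw) vac
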